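/- Let 𝒜 be the free (noncommutative, unital) R-algebra on six generators a₁₂, a₁₃, a₂₁, a₂₃, a₃₁, a₃₂, and consider the 3×3 matrices over 𝒜: A = [[1+μ, a₁₂, a₁₃], [a₂₁, 1+μ, a₂₃], [a₃₁, a₃₂, 1+μ]], Ψ^L = [[−a₂₁, μ, λ], [1, −a₃₂, μ], [μ, 1, −a₁₃]], Ψ^R = [[−a₁₂, μ, 1], [1, −a₂₃, μ], [λ⁻¹μ, 1, −a₃₁]]. Let C be the quotient of 𝒜 by the two-sided ideal generated by the 18 entries of the matrices Ψ^L·A and A·Ψ^R. Then C is isomorphic as an R-algebra to the commutative quotient R[x] ⧸ (λx² − λx − μ² − μ, λx² − μx − μ − 1) of the polynomial ring R[x], under an isomorphism sending the class of a₁₂ to the class of x. -/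

import Mathlib

/-!
The relations make sense for six elements of any algebra over a commutative ring with two units
`λ` and `μ`. Seven of the eighteen already force `a₁₂ = a₃₁ = a₃₂ = x`,
`a₁₃ = a₂₁ = a₂₃ = λx` and the two quadratic equations for `x`, and the other eleven then follow.
Hence the cord algebra and the quotient of the polynomial ring represent the same functor.
In particular the commutativity of the cord algebra is a consequence of the relations.
-/

noncomputable section

open Polynomial

/-- The Laurent polynomial ring `ℤ[λ^{±1}, μ^{±1}]`. -/
abbrev R : Type := AddMonoidAlgebra ℤ (ℤ × ℤ)

/-- The variable `λ`. -/
def lam : R := AddMonoidAlgebra.single (1, 0) 1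

/-- The variable `μ`. -/
def mu : R := AddMonoidAlgebra.single (0, 1) 1

/-- The Laurent monomial `λ⁻¹μ`. -/
def lamInvMu : R := AddMonoidAlgebra.single (-1, 1) 1

/-- Index type of the six generators `a_{ij}`, `1 ≤ i ≠ j ≤ 3`. -/
abbrev Idx : Type := {p : Fin 3 × Fin 3 // p.1 ≠ p.2}

/-- The free noncommutative unital `R`-algebra on the six generators. -/
abbrev FA : Type := FreeAlgebra R Idx

/-- The generator `a_{ij}` (indices from `0`, so `a 0 1` is the paper's `a₁₂`). -/
def a (i j : Fin 3) (h : i ≠ j) : FA := FreeAlgebra.ι R ⟨(i, j), h⟩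

/-- The matrix `A` of the left-handed trefoil. -/
def Amat : Matrix (Fin 3) (Fin 3) FA :=
  !![algebraMap R FA (1 + mu), a 0 1 (by decide), a 0 2 (by decide);
     a 1 0 (by decide), algebraMap R FA (1 + mu), a 1 2 (by decide);
     a 2 0 (by decide), a 2 1 (by decide), algebraMap R FA (1 + mu)]

/-- The matrix `Ψ^L` of the left-handed trefoil. -/
def PsiL : Matrix (Fin 3) (Fin 3) FA :=
  !![-(a 1 0 (by decide)), algebraMap R FA mu, algebraMap R FA lam;
     1, -(a 2 1 (by decide)), algebraMap R FA mu;
     algebraMap R FA mu, 1, -(a 0 2 (by decide))]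

/-- The matrix `Ψ^R` of the left-handed trefoil. -/
def PsiR : Matrix (Fin 3) (Fin 3) FA :=
  !![-(a 0 1 (by decide)), algebraMap R FA mu, 1;
     1, -(a 1 2 (by decide)), algebraMap R FA mu;
     algebraMap R FA lamInvMu, 1, -(a 2 0 (by decide))]

/-- The 18 relations: the entries of `Ψ^L·A` and `A·Ψ^R` are set to `0`. -/
inductive TrefoilRel : FA → FA → Prop
  | left (i j : Fin 3) : TrefoilRel ((PsiL * Amat) i j) 0
  | right (i j : Fin 3) : TrefoilRel ((Amat * PsiR) i j) 0

/-- The cord algebra of the left-handed trefoil, presented by generators and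
relations. -/
abbrev CTref : Type := RingQuot TrefoilRel

/-- The ideal `(λx² − λx − μ² − μ, λx² − μx − μ − 1)` of `R[x]`. -/
def trefIdeal : Ideal (Polynomial R) :=
  Ideal.span {C lam * X ^ 2 - C lam * X - C (mu ^ 2) - C mu,
              C lam * X ^ 2 - C mu * X - C mu - 1}

namespace Trefoil

section Relations

variable {k B B' : Type*} [CommRing k] [Ring B] [Algebra k B] [Ring B'] [Algebra k B']
  (l m : kˣ)

/-- The index of the generator `a_{ij}`, counted from `0`. -/
abbrev idx (i j : Fin 3) (h : i ≠ j := by decide) : Idx := ⟨(i, j), h⟩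

/-- The matrix `A`, with elements `y` of an arbitrary algebra in place of the generators. -/
def cordMatrix (y : Idx → B) : Matrix (Fin 3) (Fin 3) B :=
  !![algebraMap k B (1 + m), y (idx 0 1), y (idx 0 2);
     y (idx 1 0), algebraMap k B (1 + m), y (idx 1 2);
     y (idx 2 0), y (idx 2 1), algebraMap k B (1 + m)]

/-- The matrix `Ψ^L`, with elements `y` of an arbitrary algebra in place of the generators. -/
def leftMatrix (y : Idx → B) : Matrix (Fin 3) (Fin 3) B :=
  !![-y (idx 1 0), algebraMap k B m, algebraMap k B l;
     1, -y (idx 2 1), algebraMap k B m;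
     algebraMap k B m, 1, -y (idx 0 2)]

/-- The matrix `Ψ^R`, with elements `y` of an arbitrary algebra in place of the generators. -/
def rightMatrix (y : Idx → B) : Matrix (Fin 3) (Fin 3) B :=
  !![-y (idx 0 1), algebraMap k B m, 1;
     1, -y (idx 1 2), algebraMap k B m;
     algebraMap k B ↑(l⁻¹ * m), 1, -y (idx 2 0)]

lemma leftMatrix_mul_cordMatrix (y : Idx → B) :
    leftMatrix l m y * cordMatrix m y =
      !![(l : k) • y (idx 2 0) - y (idx 1 0),
          (m * (1 + m) : k) • 1 + (l : k) • y (idx 2 1) - y (idx 1 0) * y (idx 0 1),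
          (l * (1 + m) : k) • 1 + (m : k) • y (idx 1 2) - y (idx 1 0) * y (idx 0 2);
        (1 + m : k) • 1 + (m : k) • y (idx 2 0) - y (idx 2 1) * y (idx 1 0),
          y (idx 0 1) - y (idx 2 1),
          (m * (1 + m) : k) • 1 + y (idx 0 2) - y (idx 2 1) * y (idx 1 2);
        (m * (1 + m) : k) • 1 + y (idx 1 0) - y (idx 0 2) * y (idx 2 0),
          (1 + m : k) • 1 + (m : k) • y (idx 0 1) - y (idx 0 2) * y (idx 2 1),
          y (idx 1 2) - y (idx 0 2)] := by
  ext i j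
  fin_cases i <;> fin_cases j <;>
    simp only [leftMatrix, cordMatrix, Matrix.mul_apply, Fin.sum_univ_three, Matrix.of_apply,
      Matrix.cons_val, Algebra.algebraMap_eq_smul_one, one_mul, mul_one, neg_mul,
      smul_mul_assoc, mul_smul_comm, Fin.zero_eta, Fin.mk_one, Fin.reduceFinMk] <;> module

lemma cordMatrix_mul_rightMatrix (y : Idx → B) :
    cordMatrix m y * rightMatrix l m y =
      !![(↑(l⁻¹ * m) : k) • y (idx 0 2) - (m : k) • y (idx 0 1),
          (m * (1 + m) : k) • 1 + y (idx 0 2) - y (idx 0 1) * y (idx 1 2),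
          (1 + m : k) • 1 + (m : k) • y (idx 0 1) - y (idx 0 2) * y (idx 2 0);
        (1 + m : k) • 1 + (↑(l⁻¹ * m) : k) • y (idx 1 2) - y (idx 1 0) * y (idx 0 1),
          (m : k) • y (idx 1 0) - (m : k) • y (idx 1 2),
          (m * (1 + m) : k) • 1 + y (idx 1 0) - y (idx 1 2) * y (idx 2 0);
        (↑(l⁻¹ * m) * (1 + m) : k) • 1 + y (idx 2 1) - y (idx 2 0) * y (idx 0 1),
          (1 + m : k) • 1 + (m : k) • y (idx 2 0) - y (idx 2 1) * y (idx 1 2),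
          (m : k) • y (idx 2 1) - (m : k) • y (idx 2 0)] := by
  ext i j
  fin_cases i <;> fin_cases j <;>
    simp only [rightMatrix, cordMatrix, Matrix.mul_apply, Fin.sum_univ_three, Matrix.of_apply,
      Matrix.cons_val, Algebra.algebraMap_eq_smul_one, one_mul, mul_one, mul_neg,
      smul_mul_assoc, mul_smul_comm, Fin.zero_eta, Fin.mk_one, Fin.reduceFinMk] <;> module

lemma map_cordMatrix (f : B →ₐ[k] B') (y : Idx → B) :
    f.mapMatrix (cordMatrix m y) = cordMatrix m (f ∘ y) := by
  ext i j
  fin_cases i <;> fin_cases j <;> simp [cordMatrix]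

lemma map_leftMatrix (f : B →ₐ[k] B') (y : Idx → B) :
    f.mapMatrix (leftMatrix l m y) = leftMatrix l m (f ∘ y) := by
  ext i j
  fin_cases i <;> fin_cases j <;> simp [leftMatrix]

lemma map_rightMatrix (f : B →ₐ[k] B') (y : Idx → B) :
    f.mapMatrix (rightMatrix l m y) = rightMatrix l m (f ∘ y) := by
  ext i j
  fin_cases i <;> fin_cases j <;> simp [rightMatrix]

/-- The elements `y` satisfy the defining relations of the cord algebra, so that `a_{ij} ↦ y_{ij}`
is an augmentation with values in the possibly noncommutative algebra `B`. -/
structure IsAugmentation (y : Idx → B) : Prop where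
  left : leftMatrix l m y * cordMatrix m y = 0
  right : cordMatrix m y * rightMatrix l m y = 0

/-- The polynomial `λx² − λx − μ² − μ` for arbitrary units `λ` and `μ`. -/
def cordPoly₁ : k[X] := C (l : k) * X ^ 2 - C (l : k) * X - C ((m : k) ^ 2) - C (m : k)

/-- The polynomial `λx² − μx − μ − 1` for arbitrary units `λ` and `μ`. -/
def cordPoly₂ : k[X] := C (l : k) * X ^ 2 - C (m : k) * X - C (m : k) - 1

/-- The ideal `(λx² − λx − μ² − μ, λx² − μx − μ − 1)` for arbitrary units `λ` and `μ`. -/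
def cordIdeal : Ideal k[X] := Ideal.span {cordPoly₁ l m, cordPoly₂ l m}

lemma aeval_cordPoly₁ (x : B) :
    aeval x (cordPoly₁ l m) =
      (l : k) • (x * x) - (l : k) • x - (m : k) ^ 2 • 1 - (m : k) • 1 := by
  simp [cordPoly₁, sq, Algebra.smul_def]

lemma aeval_cordPoly₂ (x : B) :
    aeval x (cordPoly₂ l m) =
      (l : k) • (x * x) - (m : k) • x - (m : k) • 1 - 1 := by
  simp [cordPoly₂, sq, Algebra.smul_def]

lemma cordIdeal_le_ker_aeval_iff {x : B} :
    cordIdeal l m ≤ RingHom.ker (aeval x : k[X] →ₐ[k] B) ↔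
      aeval x (cordPoly₁ l m) = 0 ∧ aeval x (cordPoly₂ l m) = 0 := by
  simp [cordIdeal, Ideal.span_le, Set.insert_subset_iff]

/-- The values of the generators determined by the value `x` of `a₁₂`. The diagonal entries are
placeholders. -/
def cordValues (x : B) (p : Idx) : B :=
  !![0, x, (l : k) • x; (l : k) • x, 0, (l : k) • x; x, x, 0] p.1.1 p.1.2

lemma map_cordValues (f : B →ₐ[k] B') (x : B) : f ∘ cordValues l x = cordValues l (f x) := by
  funext ⟨⟨i, j⟩, h⟩
  fin_cases i <;> fin_cases j <;> simp [cordValues]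

lemma leftMatrix_mul_cordMatrix_cordValues (x : B) :
    leftMatrix l m (cordValues l x) * cordMatrix m (cordValues l x) =
      -!![0, aeval x (cordPoly₁ l m), (l : k) • aeval x (cordPoly₂ l m);
        aeval x (cordPoly₂ l m), 0, aeval x (cordPoly₁ l m);
        aeval x (cordPoly₁ l m), aeval x (cordPoly₂ l m), 0] := by
  rw [leftMatrix_mul_cordMatrix, aeval_cordPoly₁, aeval_cordPoly₂]
  ext i j
  fin_cases i <;> fin_cases j <;>
    simp only [cordValues, Matrix.neg_apply, Matrix.of_apply, Matrix.cons_val,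
      smul_mul_assoc, mul_smul_comm, Fin.zero_eta, Fin.mk_one, Fin.reduceFinMk] <;> module

lemma cordMatrix_mul_rightMatrix_cordValues (x : B) :
    cordMatrix m (cordValues l x) * rightMatrix l m (cordValues l x) =
      -!![0, aeval x (cordPoly₁ l m), aeval x (cordPoly₂ l m);
        aeval x (cordPoly₂ l m), 0, aeval x (cordPoly₁ l m);
        (↑l⁻¹ : k) • aeval x (cordPoly₁ l m), aeval x (cordPoly₂ l m), 0] := by
  have inv_smul_l (z : B) : (↑l⁻¹ : k) • (l : k) • z = z := inv_smul_smul l z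
  have inv_mul_smul_l (z : B) : (↑(l⁻¹ * m) : k) • (l : k) • z = (m : k) • z := by
    rw [mul_comm, Units.val_mul, mul_smul, inv_smul_l]
  rw [cordMatrix_mul_rightMatrix, aeval_cordPoly₁, aeval_cordPoly₂]
  simp only [smul_sub, inv_smul_l]
  ext i j
  fin_cases i <;> fin_cases j <;>
    simp only [cordValues, inv_mul_smul_l, Matrix.neg_apply, Matrix.of_apply, Matrix.cons_val,
      smul_mul_assoc, mul_smul_comm, Fin.zero_eta, Fin.mk_one, Fin.reduceFinMk] <;> module

variable {l m}

lemma IsAugmentation.eq_cordValues {y : Idx → B} (h : IsAugmentation l m y) :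
    y = cordValues l (y (idx 0 1)) := by
  have hL := leftMatrix_mul_cordMatrix l m y ▸ h.left
  have hR := cordMatrix_mul_rightMatrix l m y ▸ h.right
  have y₂₁ : y (idx 2 1) = y (idx 0 1) := (sub_eq_zero.mp (congrFun₂ hL 1 1)).symm
  have y₁₂ : y (idx 1 2) = y (idx 0 2) := sub_eq_zero.mp (congrFun₂ hL 2 2)
  have y₁₀ : y (idx 1 0) = y (idx 1 2) :=
    m.isUnit.smul_left_cancel.mp (sub_eq_zero.mp (congrFun₂ hR 1 1))
  have y₂₀ : y (idx 2 0) = y (idx 2 1) :=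
    (m.isUnit.smul_left_cancel.mp (sub_eq_zero.mp (congrFun₂ hR 2 2))).symm
  have y₀₂ : y (idx 0 2) = (l : k) • y (idx 0 1) := by
    have h₀₀ : (l⁻¹ * m) • y (idx 0 2) = m • y (idx 0 1) := sub_eq_zero.mp (congrFun₂ hR 0 0)
    rwa [mul_comm, mul_smul, smul_left_cancel_iff, inv_smul_eq_iff] at h₀₀
  funext ⟨⟨i, j⟩, hij⟩
  fin_cases i <;> fin_cases j <;> simp [cordValues, *] at hij ⊢

lemma isAugmentation_cordValues_iff {x : B} :
    IsAugmentation l m (cordValues l x) ↔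
      cordIdeal l m ≤ RingHom.ker (aeval x : k[X] →ₐ[k] B) := by
  rw [cordIdeal_le_ker_aeval_iff]
  refine ⟨fun h ↦ ?_, fun ⟨h₁, h₂⟩ ↦ ⟨?_, ?_⟩⟩
  · have hL := neg_eq_zero.mp (leftMatrix_mul_cordMatrix_cordValues l m x ▸ h.left)
    exact ⟨congrFun₂ hL 0 1, congrFun₂ hL 1 0⟩
  · rw [leftMatrix_mul_cordMatrix_cordValues, h₁, h₂]
    ext i j
    fin_cases i <;> fin_cases j <;> simp
  · rw [cordMatrix_mul_rightMatrix_cordValues, h₁, h₂]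
    ext i j
    fin_cases i <;> fin_cases j <;> simp

end Relations

section Presentation

variable {k : Type*} [CommRing k] (l m : kˣ)

/-- The defining relations of the cord algebra for arbitrary units `λ` and `μ`. -/
inductive CordRel : FreeAlgebra k Idx → FreeAlgebra k Idx → Prop
  | left (i j : Fin 3) :
      CordRel ((leftMatrix l m (FreeAlgebra.ι k) * cordMatrix m (FreeAlgebra.ι k)) i j) 0
  | right (i j : Fin 3) :
      CordRel ((cordMatrix m (FreeAlgebra.ι k) * rightMatrix l m (FreeAlgebra.ι k)) i j) 0

/-- The cord algebra of the left-handed trefoil, with arbitrary units of a commutative ring in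
place of the Laurent variables `λ` and `μ`. -/
abbrev CordAlgebra : Type _ := RingQuot (CordRel l m)

namespace CordAlgebra

/-- The classes of the generators `a_{ij}` in the cord algebra. -/
def gen (p : Idx) : CordAlgebra l m := RingQuot.mkAlgHom k (CordRel l m) (FreeAlgebra.ι k p)

variable {l m} {B : Type*} [Ring B] [Algebra k B]

lemma respects_cordRel_iff (f : FreeAlgebra k Idx →ₐ[k] B) :
    (∀ ⦃u v⦄, CordRel l m u v → f u = f v) ↔ IsAugmentation l m (f ∘ FreeAlgebra.ι k) := by
  have map_left := map_mul f.mapMatrix (leftMatrix l m (FreeAlgebra.ι k))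
    (cordMatrix m (FreeAlgebra.ι k))
  have map_right := map_mul f.mapMatrix (cordMatrix m (FreeAlgebra.ι k))
    (rightMatrix l m (FreeAlgebra.ι k))
  rw [map_leftMatrix, map_cordMatrix] at map_left
  rw [map_rightMatrix, map_cordMatrix] at map_right
  refine ⟨fun hf ↦ ⟨?_, ?_⟩, ?_⟩
  · rw [← map_left]
    ext i j
    exact (hf (.left i j)).trans (map_zero f)
  · rw [← map_right]
    ext i j
    exact (hf (.right i j)).trans (map_zero f)
  · rintro h _ _ (⟨i, j⟩ | ⟨i, j⟩) <;> rw [map_zero]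
    · exact congrFun₂ (map_left.trans h.left) i j
    · exact congrFun₂ (map_right.trans h.right) i j

lemma isAugmentation_gen : IsAugmentation l m (gen l m) :=
  (respects_cordRel_iff _).mp fun _ _ h ↦ RingQuot.mkAlgHom_rel k h

/-- The homomorphism out of the cord algebra given by an augmentation. -/
def lift {y : Idx → B} (hy : IsAugmentation l m y) : CordAlgebra l m →ₐ[k] B :=
  RingQuot.liftAlgHom k ⟨FreeAlgebra.lift k y,
    (respects_cordRel_iff _).mpr (by rwa [FreeAlgebra.ι_comp_lift])⟩

lemma lift_gen {y : Idx → B} (hy : IsAugmentation l m y) (p : Idx) :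
    lift hy (gen l m p) = y p := by
  simp [lift, gen]

lemma hom_ext {f g : CordAlgebra l m →ₐ[k] B} (h : f ∘ gen l m = g ∘ gen l m) : f = g :=
  RingQuot.ringQuot_ext' _ _ _ (FreeAlgebra.hom_ext h)

variable (l m)

lemma isAugmentation_cordValues_mk_X :
    IsAugmentation l m (cordValues l (Ideal.Quotient.mk (cordIdeal l m) X)) := by
  refine isAugmentation_cordValues_iff.mpr fun p hp ↦ ?_
  rw [RingHom.mem_ker, ← Ideal.Quotient.mkₐ_eq_mk k, aeval_algHom_apply, aeval_X_left_apply]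
  exact Ideal.Quotient.eq_zero_iff_mem.mpr hp

lemma cordValues_gen : cordValues l (gen l m (idx 0 1)) = gen l m :=
  isAugmentation_gen.eq_cordValues.symm

/-- The homomorphism from the cord algebra that sends `a₁₂` to the class of `X`. -/
def toQuotient : CordAlgebra l m →ₐ[k] k[X] ⧸ cordIdeal l m :=
  lift (isAugmentation_cordValues_mk_X l m)

/-- The homomorphism to the cord algebra that sends the class of `X` to `a₁₂`. -/
def ofQuotient : k[X] ⧸ cordIdeal l m →ₐ[k] CordAlgebra l m :=
  Ideal.Quotient.liftₐ (cordIdeal l m) (aeval (gen l m (idx 0 1)))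
    (isAugmentation_cordValues_iff.mp ((cordValues_gen l m).symm ▸ isAugmentation_gen))

lemma toQuotient_comp_gen :
    toQuotient l m ∘ gen l m = cordValues l (Ideal.Quotient.mk (cordIdeal l m) X) :=
  funext (lift_gen _)

lemma toQuotient_gen : toQuotient l m (gen l m (idx 0 1)) = Ideal.Quotient.mk (cordIdeal l m) X :=
  lift_gen _ _

lemma ofQuotient_mk_X : ofQuotient l m (Ideal.Quotient.mk (cordIdeal l m) X) = gen l m (idx 0 1) :=
  aeval_X _

lemma toQuotient_comp_ofQuotient :
    (toQuotient l m).comp (ofQuotient l m) = AlgHom.id k (k[X] ⧸ cordIdeal l m) := by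
  refine Ideal.Quotient.algHom_ext _ (Polynomial.algHom_ext ?_)
  exact (congrArg (toQuotient l m) (ofQuotient_mk_X l m)).trans (toQuotient_gen l m)

lemma ofQuotient_comp_toQuotient :
    (ofQuotient l m).comp (toQuotient l m) = AlgHom.id k (CordAlgebra l m) := by
  refine hom_ext ?_
  rw [AlgHom.coe_comp, Function.comp_assoc, toQuotient_comp_gen, map_cordValues, ofQuotient_mk_X,
    cordValues_gen, AlgHom.coe_id, Function.id_comp]

end CordAlgebra

end Presentation

/-- `λ` as a unit of the Laurent polynomial ring. -/
def lamUnit : Rˣ where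
  val := lam
  inv := AddMonoidAlgebra.single (-1, 0) 1
  val_inv := by simp [lam, AddMonoidAlgebra.single_mul_single, AddMonoidAlgebra.one_def,
    Prod.zero_eq_mk]
  inv_val := by simp [lam, AddMonoidAlgebra.single_mul_single, AddMonoidAlgebra.one_def,
    Prod.zero_eq_mk]

/-- `μ` as a unit of the Laurent polynomial ring. -/
def muUnit : Rˣ where
  val := mu
  inv := AddMonoidAlgebra.single (0, -1) 1
  val_inv := by simp [mu, AddMonoidAlgebra.single_mul_single, AddMonoidAlgebra.one_def,
    Prod.zero_eq_mk]
  inv_val := by simp [mu, AddMonoidAlgebra.single_mul_single, AddMonoidAlgebra.one_def,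
    Prod.zero_eq_mk]

lemma lamUnit_inv_mul_muUnit : ((lamUnit⁻¹ * muUnit : Rˣ) : R) = lamInvMu := by
  simp [lamUnit, muUnit, mu, lamInvMu, AddMonoidAlgebra.single_mul_single]

lemma rightMatrix_eq_PsiR : rightMatrix lamUnit muUnit (FreeAlgebra.ι R) = PsiR := by
  rw [rightMatrix, lamUnit_inv_mul_muUnit]
  rfl

lemma cordRel_eq_trefoilRel : CordRel lamUnit muUnit = TrefoilRel := by
  funext u v
  refine propext ⟨?_, ?_⟩
  · rintro (⟨i, j⟩ | ⟨i, j⟩)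
    · exact .left i j
    · rw [rightMatrix_eq_PsiR]
      exact .right i j
  · rintro (⟨i, j⟩ | ⟨i, j⟩)
    · exact .left i j
    · rw [← rightMatrix_eq_PsiR]
      exact .right i j

end Trefoil

open Trefoil in
theorem trefoil_cordAlgebra_general {k : Type*} [CommRing k] (l m : kˣ) :
    ∃ e : CordAlgebra l m ≃ₐ[k] k[X] ⧸ cordIdeal l m,
      e (CordAlgebra.gen l m (idx 0 1)) = Ideal.Quotient.mk (cordIdeal l m) X :=
  ⟨.ofAlgHom (CordAlgebra.toQuotient l m) (CordAlgebra.ofQuotient l m)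
    (CordAlgebra.toQuotient_comp_ofQuotient l m) (CordAlgebra.ofQuotient_comp_toQuotient l m),
    CordAlgebra.toQuotient_gen l m⟩

/-- The cord algebra of the left-handed trefoil is
`ℤ[λ^{±1},μ^{±1}][x]/(λx²−λx−μ²−μ, λx²−μx−μ−1)`, via an isomorphism sending
the class of `a₁₂` to the class of `x`. -/
theorem trefoil_cordAlgebra :
    ∃ e : CTref ≃ₐ[R] Polynomial R ⧸ trefIdeal,
      e (RingQuot.mkAlgHom R TrefoilRel (a 0 1 (by decide))) =
        Ideal.Quotient.mk trefIdeal X := by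
  unfold CTref
  rw [← Trefoil.cordRel_eq_trefoilRel]
  exact trefoil_cordAlgebra_general Trefoil.lamUnit Trefoil.muUnit
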